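/- arXiv:1906.00578 — 2 statements merged into one kernel-verified Lean document; each statement's English description precedes it below -/
import Mathlib

section
/- Let G=(V,E) be a graph, let θ:ℤ₂→Aut(G) act freely on V, and let X⊆V be a (possibly empty) subset with θ(γ)(X)=X. Let τ:ℤ₂→O(3) send the non-trivial element to the reflection of ℝ³ in a plane through the origin, and let τ':ℤ₂→O(3) send the non-trivial element to the rotation of ℝ³ by π about a line through the origin. Then G can be realised as a forced ℤ₂-symmetric infinitesimally rigid ℤ₂-symmetric spherical framework on S² with respect to θ and τ, with the points assigned to X lying on a great circle, if and only if G can be realised as a forced ℤ₂-symmetric infinitesimally rigid ℤ₂-symmetric spherical framework on S² with respect to θ and τ', with the points assigned to X lying on a great circle. -/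
/-!
The proof is a partial antipodal switch. The half-turn about a line is minus the reflection in the
plane orthogonal to that line. Since `σ` is a fixed-point-free involution, `exists_signs` gives signs
`ε i = ±1` with `ε (σ i) = -ε i`. Replacing every `p i` by `ε i • p i` turns equivariance under a
matrix `A` into equivariance under `-A`; doing the same with infinitesimal motions merely multiplies
the equation of the edge `{i, j}` by `ε i * ε j`, keeps trivial motions trivial, and preserves spans
and the vanishing of linear forms. The axes of the two given isometries may differ, so an
orthogonal change of coordinates `R` swapping `ν` and `u` (`exists_symm_involution`) is carried
along. The transfer (`transfer`) needs only `B * R = -(R * A)` with `R` a symmetric involution,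
a condition symmetric in `A` and `B`, so it yields both implications.
-/

open Matrix

namespace RigidityPaper

variable {V : Type*}

/-! ### Spherical frameworks on `S^{n-1} ⊆ ℝ^n` -/

/-- A spherical framework: all points on the unit sphere, linearly spanning the ambient space. -/
def IsSphFw {n : ℕ} (p : V → Fin n → ℝ) : Prop :=
  (∀ i, p i ⬝ᵥ p i = 1) ∧ Submodule.span ℝ (Set.range p) = ⊤

/-- An infinitesimal motion of a spherical framework. -/
def SphMotion {n : ℕ} (G : SimpleGraph V) (p q : V → Fin n → ℝ) : Prop :=
  (∀ i j, G.Adj i j → p i ⬝ᵥ q j + p j ⬝ᵥ q i = 0) ∧ ∀ i, p i ⬝ᵥ q i = 0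

/-- A trivial infinitesimal motion of a spherical framework. -/
def SphTrivial {n : ℕ} (p q : V → Fin n → ℝ) : Prop :=
  ∃ S : Matrix (Fin n) (Fin n) ℝ, Sᵀ = -S ∧ ∀ i, q i = S *ᵥ p i

/-- Infinitesimal rigidity of a spherical framework. -/
def SphRigid {n : ℕ} (G : SimpleGraph V) (p : V → Fin n → ℝ) : Prop :=
  ∀ q, SphMotion G p q → SphTrivial p q

/-- Forced symmetric infinitesimal rigidity of a spherical framework, where `sym` is
the symmetry (equivariance) condition on infinitesimal motions. -/
def SphForcedRigid {n : ℕ} (G : SimpleGraph V) (sym : (V → Fin n → ℝ) → Prop)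
    (p : V → Fin n → ℝ) : Prop :=
  ∀ q, SphMotion G p q → sym q → SphTrivial p q

/-- The set of infinitesimal motions of a spherical framework, i.e. the kernel of the
spherical rigidity matrix. -/
def SphMotionSet {n : ℕ} (G : SimpleGraph V) (p : V → Fin n → ℝ) :
    Set (V → Fin n → ℝ) := {q | SphMotion G p q}

/-! ### Bar-joint frameworks in `ℝ^d` -/

/-- An infinitesimal motion of a bar-joint framework. -/
def BJMotion {d : ℕ} (G : SimpleGraph V) (p u : V → Fin d → ℝ) : Prop :=
  ∀ i j, G.Adj i j → (p i - p j) ⬝ᵥ (u i - u j) = 0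

/-- A trivial infinitesimal motion of a bar-joint framework. -/
def BJTrivial {d : ℕ} (p u : V → Fin d → ℝ) : Prop :=
  ∃ (S : Matrix (Fin d) (Fin d) ℝ) (t : Fin d → ℝ), Sᵀ = -S ∧ ∀ i, u i = S *ᵥ p i + t

/-- Infinitesimal rigidity of a bar-joint framework. -/
def BJRigid {d : ℕ} (G : SimpleGraph V) (p : V → Fin d → ℝ) : Prop :=
  ∀ u, BJMotion G p u → BJTrivial p u

/-- Forced symmetric infinitesimal rigidity of a bar-joint framework. -/
def BJForcedRigid {d : ℕ} (G : SimpleGraph V) (sym : (V → Fin d → ℝ) → Prop)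
    (p : V → Fin d → ℝ) : Prop :=
  ∀ u, BJMotion G p u → sym u → BJTrivial p u

/-- The set of infinitesimal motions of a bar-joint framework, i.e. the kernel of the
rigidity matrix. -/
def BJMotionSet {d : ℕ} (G : SimpleGraph V) (p : V → Fin d → ℝ) :
    Set (V → Fin d → ℝ) := {u | BJMotion G p u}

/-! ### Symmetry -/

/-- `p` is equivariant with respect to the vertex permutation `σ` and the matrix `A`. -/
def MatEquiv {n : ℕ} (σ : Equiv.Perm V) (A : Matrix (Fin n) (Fin n) ℝ)
    (p : V → Fin n → ℝ) : Prop :=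
  ∀ i, A *ᵥ p i = p (σ i)

/-- `σ` is an automorphism of the graph `G`. -/
def IsGraphAut (G : SimpleGraph V) (σ : Equiv.Perm V) : Prop :=
  ∀ i j, G.Adj (σ i) (σ j) ↔ G.Adj i j

/-- The augmented matrix `diag(A, 1)` of size `(d+1) × (d+1)`. -/
def aug {d : ℕ} (A : Matrix (Fin d) (Fin d) ℝ) :
    Matrix (Fin (d + 1)) (Fin (d + 1)) ℝ :=
  Matrix.of fun i j =>
    if h : (i : ℕ) < d then
      (if h' : (j : ℕ) < d then A ⟨i.1, h⟩ ⟨j.1, h'⟩ else 0)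
    else (if (j : ℕ) < d then 0 else 1)

/-- Extend a vector of `ℝ^d` to `ℝ^{d+1}` by appending a last coordinate. -/
def extVec {d : ℕ} (x : Fin d → ℝ) (t : ℝ) : Fin (d + 1) → ℝ := Fin.snoc x t

/-- A point of `S^d ⊆ ℝ^{d+1}` lies on the equator: its last coordinate vanishes. -/
def OnEquator {d : ℕ} (x : Fin (d + 1) → ℝ) : Prop := x (Fin.last d) = 0

/-- `A` is the reflection in the linear hyperplane with unit normal `ν`. -/
def IsReflection {d : ℕ} (A : Matrix (Fin d) (Fin d) ℝ) (ν : Fin d → ℝ) : Prop :=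
  ν ⬝ᵥ ν = 1 ∧ ∀ x, A *ᵥ x = x - (2 * (ν ⬝ᵥ x)) • ν

/-- `A` is the rotation of `ℝ³` by `π` about the line through the origin with unit
direction `u`. -/
def IsHalfTurn3 (A : Matrix (Fin 3) (Fin 3) ℝ) (u : Fin 3 → ℝ) : Prop :=
  u ⬝ᵥ u = 1 ∧ ∀ x, A *ᵥ x = (2 * (u ⬝ᵥ x)) • u - x

/-! ### Point-hyperplane frameworks in `ℝ^d`

A point-hyperplane framework on a PH-graph with hyperplane vertex set `VH` is given by
`p` (points, relevant on `VHᶜ`), `a` (unit normals of hyperplanes, relevant on `VH`) and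
`r` (offsets of hyperplanes, relevant on `VH`); vertex `j ∈ VH` represents the hyperplane
`{x | a j ⬝ᵥ x + r j = 0}`. -/

/-- Point-hyperplane framework: unit normals, and the points together with the
hyperplanes affinely span `ℝ^d`. -/
def IsPHFw {d : ℕ} (VH : Set V) (p a : V → Fin d → ℝ) (r : V → ℝ) : Prop :=
  (∀ j ∈ VH, a j ⬝ᵥ a j = 1) ∧
  affineSpan ℝ ((p '' VHᶜ) ∪ ⋃ j ∈ VH, {x | a j ⬝ᵥ x + r j = 0}) = ⊤

/-- An infinitesimal motion `(p', a', r')` of the point-hyperplane framework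
`(G, VH, p, a, r)`. -/
def PHMotion {d : ℕ} (G : SimpleGraph V) (VH : Set V) (p a : V → Fin d → ℝ)
    (r : V → ℝ) (p' a' : V → Fin d → ℝ) (r' : V → ℝ) : Prop :=
  (∀ i j, G.Adj i j → i ∉ VH → j ∉ VH → (p i - p j) ⬝ᵥ (p' i - p' j) = 0) ∧
  (∀ i j, G.Adj i j → i ∉ VH → j ∈ VH → p i ⬝ᵥ a' j + p' i ⬝ᵥ a j + r' j = 0) ∧
  (∀ i j, G.Adj i j → i ∈ VH → j ∈ VH → a i ⬝ᵥ a' j + a' i ⬝ᵥ a j = 0) ∧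
  (∀ i ∈ VH, a i ⬝ᵥ a' i = 0)

/-- The space of infinitesimal motions of a point-hyperplane framework (the components
that do not correspond to unknowns of the rigidity matrix are normalised to zero). -/
def PHMotionSet {d : ℕ} (G : SimpleGraph V) (VH : Set V) (p a : V → Fin d → ℝ)
    (r : V → ℝ) : Set ((V → Fin d → ℝ) × (V → Fin d → ℝ) × (V → ℝ)) :=
  {m | PHMotion G VH p a r m.1 m.2.1 m.2.2 ∧ (∀ i ∈ VH, m.1 i = 0) ∧
    ∀ i, i ∉ VH → m.2.1 i = 0 ∧ m.2.2 i = 0}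

/-- The dimension of (the span of) a subset of a real vector space; for a linear
subspace this is just its dimension. -/
noncomputable def setDim {W : Type*} [AddCommGroup W] [Module ℝ W] (s : Set W) : ℕ :=
  Module.finrank ℝ (Submodule.span ℝ s)

/-- Infinitesimal rigidity of a point-hyperplane framework in `ℝ^d`: the space of
infinitesimal motions has dimension `(d+1).choose 2`. -/
def PHRigid {d : ℕ} (G : SimpleGraph V) (VH : Set V) (p a : V → Fin d → ℝ)
    (r : V → ℝ) : Prop :=
  setDim (PHMotionSet G VH p a r) = Nat.choose (d + 1) 2

/-- A trivial infinitesimal motion of a point-hyperplane framework: one that extends to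
(i.e. is) an infinitesimal motion of the framework on the complete PH-graph on the same
points and hyperplanes. -/
def PHTrivial {d : ℕ} (VH : Set V) (p a : V → Fin d → ℝ) (r : V → ℝ)
    (p' a' : V → Fin d → ℝ) (r' : V → ℝ) : Prop :=
  PHMotion (⊤ : SimpleGraph V) VH p a r p' a' r'

/-- Forced symmetric infinitesimal rigidity of a point-hyperplane framework. -/
def PHForcedRigid {d : ℕ} (G : SimpleGraph V) (VH : Set V) (p a : V → Fin d → ℝ)
    (r : V → ℝ)
    (sym : (V → Fin d → ℝ) → (V → Fin d → ℝ) → (V → ℝ) → Prop) : Prop :=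
  ∀ p' a' r', PHMotion G VH p a r p' a' r' → sym p' a' r' →
    PHTrivial VH p a r p' a' r'

/-- Equivariance of a point-hyperplane configuration with respect to a vertex
permutation `σ` and a matrix `A` (normals equivariant up to sign, offsets invariant). -/
def PHEquiv {d : ℕ} (σ : Equiv.Perm V) (A : Matrix (Fin d) (Fin d) ℝ) (VH : Set V)
    (p a : V → Fin d → ℝ) (r : V → ℝ) : Prop :=
  (∀ i, i ∉ VH → A *ᵥ p i = p (σ i)) ∧
  (∀ j ∈ VH, A *ᵥ a j = a (σ j) ∨ A *ᵥ a j = -a (σ j)) ∧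
  ∀ j ∈ VH, r j = r (σ j)

/-- Equivariance of an infinitesimal motion of a point-hyperplane framework with
normals `a`, with respect to `σ` and `A` (the sign matching that of the normals). -/
def PHMotionEquiv {d : ℕ} (σ : Equiv.Perm V) (A : Matrix (Fin d) (Fin d) ℝ)
    (VH : Set V) (a : V → Fin d → ℝ)
    (p' a' : V → Fin d → ℝ) (r' : V → ℝ) : Prop :=
  (∀ i, i ∉ VH → A *ᵥ p' i = p' (σ i)) ∧
  (∀ j ∈ VH, (A *ᵥ a j = a (σ j) → A *ᵥ a' j = a' (σ j)) ∧
    (A *ᵥ a j = -a (σ j) → A *ᵥ a' j = -a' (σ j))) ∧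
  ∀ j ∈ VH, r' j = r' (σ j)

/-! ### Regularity: maximal rank of the rigidity matrix among symmetric realisations,
equivalently minimal dimension of the space of infinitesimal motions. -/

/-- A spherical realisation is regular with respect to the class of realisations cut
out by `sym` if its rigidity matrix has maximal rank there, equivalently its motion
space has minimal dimension. -/
def SphRegularWrt {n : ℕ} (G : SimpleGraph V) (sym : (V → Fin n → ℝ) → Prop)
    (p : V → Fin n → ℝ) : Prop :=
  IsSphFw p ∧ sym p ∧
  ∀ q : V → Fin n → ℝ, IsSphFw q → sym q →
    setDim (SphMotionSet G p) ≤ setDim (SphMotionSet G q)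

/-- Regularity of a bar-joint realisation with respect to the class `sym`. -/
def BJRegularWrt {d : ℕ} (G : SimpleGraph V) (sym : (V → Fin d → ℝ) → Prop)
    (p : V → Fin d → ℝ) : Prop :=
  sym p ∧ ∀ q : V → Fin d → ℝ, sym q →
    setDim (BJMotionSet G p) ≤ setDim (BJMotionSet G q)

/-- Regularity of a point-hyperplane realisation with respect to the class `sym`. -/
def PHRegularWrt {d : ℕ} (G : SimpleGraph V) (VH : Set V)
    (sym : (V → Fin d → ℝ) → (V → Fin d → ℝ) → (V → ℝ) → Prop)
    (p a : V → Fin d → ℝ) (r : V → ℝ) : Prop :=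
  IsPHFw VH p a r ∧ sym p a r ∧
  ∀ (q b : V → Fin d → ℝ) (s : V → ℝ), IsPHFw VH q b s → sym q b s →
    setDim (PHMotionSet G VH p a r) ≤ setDim (PHMotionSet G VH q b s)

/-! ### Isostatic frameworks -/

/-- An isostatic bar-joint framework: infinitesimally rigid, and deleting any edge
destroys infinitesimal rigidity. -/
def BJIsostatic {d : ℕ} (G : SimpleGraph V) (p : V → Fin d → ℝ) : Prop :=
  BJRigid G p ∧ ∀ e ∈ G.edgeSet, ¬ BJRigid (G.deleteEdges {e}) p

/-- An isostatic point-hyperplane framework. -/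
def PHIsostatic {d : ℕ} (G : SimpleGraph V) (VH : Set V) (p a : V → Fin d → ℝ)
    (r : V → ℝ) : Prop :=
  PHRigid G VH p a r ∧ ∀ e ∈ G.edgeSet, ¬ PHRigid (G.deleteEdges {e}) VH p a r

/-! ### Counts for Laman-type theorems -/

/-- `(2,3)`-tightness of a graph. -/
def TwoThreeTight (G : SimpleGraph V) : Prop :=
  G.edgeSet.ncard + 3 = 2 * Nat.card V ∧
  ∀ F ⊆ G.edgeSet, F.Nonempty →
    F.ncard + 3 ≤ 2 * {v : V | ∃ e ∈ F, v ∈ e}.ncard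

/-! ### Quotient `ℤ₂`-gain graphs

For a free involution `σ` of `G` with a transversal `V₀` of the vertex orbits, the
quotient `ℤ₂`-gain graph has vertex set `V₀` and, since `ℤ₂`-gains are involutive,
its edges may be recorded as pairs `(s(i,j), α)` with `i, j ∈ V₀` and `α ∈ ZMod 2`:
gain `0` for the orbit of an edge `{i, j}` of `G`, and gain `1` for the orbit of an
edge `{i, σ j}`. -/

/-- `e` is an edge of the quotient `ℤ₂`-gain graph of `(G, σ)` with transversal `V₀`. -/
def GainEdge (G : SimpleGraph V) (σ : Equiv.Perm V) (V₀ : Set V)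
    (e : Sym2 V × ZMod 2) : Prop :=
  ∃ i j, i ∈ V₀ ∧ j ∈ V₀ ∧ e.1 = s(i, j) ∧
    ((e.2 = 0 ∧ G.Adj i j) ∨ (e.2 = 1 ∧ G.Adj i (σ j)))

/-- The vertices spanned by a set of gain edges. -/
def vsupp (F : Set (Sym2 V × ZMod 2)) : Set V := {v | ∃ e ∈ F, v ∈ e.1}

/-- A closed walk in a set `F` of `ℤ₂`-gain edges: a nonempty list of steps, each step
`(u, v, α)` traversing the edge `(s(u,v), α) ∈ F`, consecutive steps chained, returning
to the start. -/
def IsClosedWalk (F : Set (Sym2 V × ZMod 2)) (w : List (V × V × ZMod 2)) : Prop :=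
  w ≠ [] ∧ (∀ st ∈ w, (s(st.1, st.2.1), st.2.2) ∈ F) ∧
  List.Chain' (fun st₁ st₂ => st₁.2.1 = st₂.1) w ∧
  w.getLast?.map (fun st => st.2.1) = w.head?.map (fun st => st.1)

/-- A set of `ℤ₂`-gain edges is balanced if every closed walk has trivial gain. -/
def GainBalanced (F : Set (Sym2 V × ZMod 2)) : Prop :=
  ∀ w, IsClosedWalk F w → (w.map fun st => st.2.2).sum = 0

/-- `(2,3,m)`-gain-sparsity of a set of `ℤ₂`-gain edges. -/
def GainSparse (m : ℕ) (Es : Set (Sym2 V × ZMod 2)) : Prop :=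
  (∀ F ⊆ Es, F.Nonempty → GainBalanced F →
    F.ncard + 3 ≤ 2 * (vsupp F).ncard) ∧
  ∀ F ⊆ Es, F.Nonempty → F.ncard + m ≤ 2 * (vsupp F).ncard

/-- The quotient `ℤ₂`-gain graph of `(G, σ)` (with transversal `V₀`) contains a
spanning `(2,3,m)`-gain-tight subgraph. -/
def HasSpanningGainTight (G : SimpleGraph V) (σ : Equiv.Perm V) (V₀ : Set V)
    (m : ℕ) : Prop :=
  ∃ H : Set (Sym2 V × ZMod 2), (∀ e ∈ H, GainEdge G σ V₀ e) ∧
    GainSparse m H ∧ H.ncard + m = 2 * V₀.ncard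

/-- A fixed-point-free involution of a finite set admits a choice of signs that it reverses:
in every orbit, the sign records which of the two points comes first in some fixed enumeration. -/
lemma exists_signs [Fintype V] (σ : Equiv.Perm V) (hσ2 : σ * σ = 1)
    (hfree : ∀ i : V, σ i ≠ i) :
    ∃ ε : V → ℝ, (∀ i, ε i * ε i = 1) ∧ ∀ i, ε (σ i) = -ε i := by
  classical
  let e := Fintype.equivFin V
  have hσσ : ∀ i, σ (σ i) = i := fun i => by
    simpa using congrArg (fun f : Equiv.Perm V => f i) hσ2
  refine ⟨fun i => if e i < e (σ i) then 1 else -1, fun i => ?_, fun i => ?_⟩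
  · dsimp only
    split_ifs <;> norm_num
  · have hne : e (σ i) ≠ e i := fun h => hfree i (e.injective h)
    simp only [hσσ]
    rcases lt_or_gt_of_ne hne with h | h
    · simp [h, h.not_gt]
    · simp [h, h.not_gt]

/-- A symmetric matrix is self-adjoint for the dot product. -/
lemma mulVec_dotProduct_of_symm {n : ℕ} {R : Matrix (Fin n) (Fin n) ℝ} (hR : Rᵀ = R)
    (x y : Fin n → ℝ) : (R *ᵥ x) ⬝ᵥ y = x ⬝ᵥ (R *ᵥ y) := by
  rw [dotProduct_mulVec, ← mulVec_transpose, hR]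

/-- Two unit vectors are exchanged by a symmetric orthogonal involution, namely the Householder
reflection in the hyperplane bisecting them if they are distinct, and the identity otherwise. -/
lemma exists_symm_involution {n : ℕ} (ν u : Fin n → ℝ) (hν : ν ⬝ᵥ ν = 1) (hu : u ⬝ᵥ u = 1) :
    ∃ R : Matrix (Fin n) (Fin n) ℝ, Rᵀ = R ∧ R * R = 1 ∧ R *ᵥ ν = u := by
  by_cases h : u = ν
  · exact ⟨1, transpose_one, one_mul 1, by rw [one_mulVec, h]⟩
  obtain ⟨m, hm⟩ : ∃ m, m = u - ν := ⟨_, rfl⟩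
  have hm0 : m ⬝ᵥ m ≠ 0 := fun h0 =>
    h (sub_eq_zero.mp (hm ▸ dotProduct_self_eq_zero.mp h0))
  have hmm : m ⬝ᵥ m = 2 - 2 * (u ⬝ᵥ ν) := by
    rw [hm, sub_dotProduct, dotProduct_sub, dotProduct_sub, hν, hu, dotProduct_comm ν u]
    ring
  have hmν : m ⬝ᵥ ν = u ⬝ᵥ ν - 1 := by rw [hm, sub_dotProduct, hν]
  have happ : ∀ x, (1 - (2 / (m ⬝ᵥ m)) • vecMulVec m m) *ᵥ x
      = x - (2 / (m ⬝ᵥ m) * (m ⬝ᵥ x)) • m := fun x => by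
    rw [sub_mulVec, one_mulVec, smul_mulVec, vecMulVec_mulVec, op_smul_eq_smul, smul_smul]
  refine ⟨1 - (2 / (m ⬝ᵥ m)) • vecMulVec m m, ?_, ?_, ?_⟩
  · rw [transpose_sub, transpose_one, transpose_smul, transpose_vecMulVec]
  · refine ext_of_mulVec_single fun i => ?_
    rw [← mulVec_mulVec, one_mulVec, happ (Pi.single i 1), happ, dotProduct_sub,
      dotProduct_smul, smul_eq_mul, sub_sub, ← add_smul]
    generalize m ⬝ᵥ Pi.single i 1 = c
    have : 2 / (m ⬝ᵥ m) * c + 2 / (m ⬝ᵥ m) * (c - 2 / (m ⬝ᵥ m) * c * (m ⬝ᵥ m)) = 0 := by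
      field_simp
      ring
    rw [this, zero_smul, sub_zero]
  · rw [happ]
    have : 2 / (m ⬝ᵥ m) * (m ⬝ᵥ ν) = -1 := by
      rw [div_mul_eq_mul_div, div_eq_iff hm0, hmm, hmν]
      ring
    rw [this, hm]
    simp

lemma intertwine_symm {n : ℕ} {A B R : Matrix (Fin n) (Fin n) ℝ} (hRR : R * R = 1)
    (hBR : B * R = -(R * A)) : A * R = -(R * B) := by
  calc A * R = R * (R * A) * R := by rw [← mul_assoc R R A, hRR, one_mul]
    _ = -(R * (B * R) * R) := by rw [hBR, mul_neg, neg_mul, neg_neg]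
    _ = -(R * B) := by rw [mul_assoc, mul_assoc B, hRR, mul_one]

/-- The sign switch `p ↦ (ε i • R p i)`, which carries forced rigid realisations with symmetry `A`
to forced rigid realisations with symmetry `B`, when `R` intertwines `B` with `-A`. -/
lemma transfer (G : SimpleGraph V) (σ : Equiv.Perm V) (X : Set V) (ε : V → ℝ)
    (hε : ∀ i, ε i * ε i = 1) (hεσ : ∀ i, ε (σ i) = -ε i)
    (A B R : Matrix (Fin 3) (Fin 3) ℝ) (hRt : Rᵀ = R) (hRR : R * R = 1)
    (hBR : B * R = -(R * A)) :
    (∃ p : V → Fin 3 → ℝ, IsSphFw p ∧ MatEquiv σ A p ∧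
      SphForcedRigid G (MatEquiv σ A) p ∧
      ∃ w : Fin 3 → ℝ, w ≠ 0 ∧ ∀ i ∈ X, w ⬝ᵥ p i = 0) →
    (∃ p : V → Fin 3 → ℝ, IsSphFw p ∧ MatEquiv σ B p ∧
      SphForcedRigid G (MatEquiv σ B) p ∧
      ∃ w : Fin 3 → ℝ, w ≠ 0 ∧ ∀ i ∈ X, w ⬝ᵥ p i = 0) := by
  rintro ⟨p, ⟨hunit, hspan⟩, hpA, hrig, w, hw0, hw⟩
  have hRRx : ∀ x, R *ᵥ (R *ᵥ x) = x := fun x => by rw [mulVec_mulVec, hRR, one_mulVec]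
  have hadj := mulVec_dotProduct_of_symm hRt
  have hiso : ∀ x y, (R *ᵥ x) ⬝ᵥ (R *ᵥ y) = x ⬝ᵥ y := fun x y => by rw [hadj, hRRx]
  have hAR := intertwine_symm hRR hBR
  refine ⟨fun i => ε i • R *ᵥ p i, ⟨fun i => ?_, ?_⟩, fun i => ?_, fun q hq hqB => ?_,
    R *ᵥ w, fun h => hw0 ?_, fun i hi => ?_⟩
  · rw [smul_dotProduct, dotProduct_smul, hiso, hunit, smul_smul, hε, one_smul]
  · rw [eq_top_iff]
    have htop : (⊤ : Submodule ℝ (Fin 3 → ℝ)).map R.mulVecLin = ⊤ := by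
      rw [Submodule.map_top, LinearMap.range_eq_top]
      exact fun x => ⟨R *ᵥ x, hRRx x⟩
    rw [← htop, ← hspan, Submodule.map_span, Submodule.span_le]
    rintro _ ⟨_, ⟨i, rfl⟩, rfl⟩
    have hi : R.mulVecLin (p i) = ε i • (ε i • R *ᵥ p i) := by
      rw [smul_smul, hε, one_smul]; rfl
    rw [hi]
    exact Submodule.smul_mem _ _ (Submodule.subset_span ⟨i, rfl⟩)
  · dsimp only
    rw [mulVec_smul, mulVec_mulVec, hBR, neg_mulVec, ← mulVec_mulVec, hpA, hεσ, neg_smul, smul_neg]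
  · -- Undoing the switch turns `q` into a motion of the original framework.
    have hdot : ∀ i j, p i ⬝ᵥ (ε j • R *ᵥ q j) = ε i * ε j * ((ε i • R *ᵥ p i) ⬝ᵥ q j) := by
      intro i j
      rw [dotProduct_smul, smul_dotProduct, hadj, smul_eq_mul, smul_eq_mul]
      linear_combination (-(ε j) * (p i ⬝ᵥ (R *ᵥ q j))) * hε i
    obtain ⟨S, hS, hSp⟩ := hrig (fun i => ε i • R *ᵥ q i)
      ⟨fun i j hij => by
        dsimp only
        rw [hdot, hdot, mul_comm (ε j), ← mul_add, hq.1 i j hij, mul_zero],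
       fun i => by dsimp only; rw [hdot, hq.2 i, mul_zero]⟩
      (fun i => by
        dsimp only
        rw [mulVec_smul, mulVec_mulVec, hAR, neg_mulVec, ← mulVec_mulVec, hqB, hεσ, neg_smul,
          smul_neg])
    refine ⟨R * S * R, ?_, fun i => ?_⟩
    · rw [transpose_mul, transpose_mul, hRt, hS, neg_mul, mul_neg, mul_assoc]
    · have hqi : q i = ε i • R *ᵥ (ε i • R *ᵥ q i) := by
        rw [mulVec_smul, hRRx, smul_smul, hε, one_smul]
      have hSi : ε i • R *ᵥ q i = S *ᵥ p i := hSp i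
      dsimp only
      rw [hqi, hSi, mulVec_smul, ← mulVec_mulVec, ← mulVec_mulVec, hRRx]
  · rw [← hRRx w, h, mulVec_zero]
  · rw [dotProduct_smul, hiso, hw i hi, smul_zero]

/-- forced `ℤ₂`-symmetric analogue of Statement 9 on `S²`. -/
theorem statement_10 {V : Type*} [Fintype V] (G : SimpleGraph V)
    (σ : Equiv.Perm V) (hσ2 : σ * σ = 1) (hσaut : IsGraphAut G σ)
    (hfree : ∀ i : V, σ i ≠ i)
    (X : Set V) (hX : ∀ i ∈ X, σ i ∈ X)
    (A : Matrix (Fin 3) (Fin 3) ℝ) (ν : Fin 3 → ℝ) (hA : IsReflection A ν)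
    (B : Matrix (Fin 3) (Fin 3) ℝ) (u : Fin 3 → ℝ) (hB : IsHalfTurn3 B u) :
    (∃ p : V → Fin 3 → ℝ, IsSphFw p ∧ MatEquiv σ A p ∧
      SphForcedRigid G (MatEquiv σ A) p ∧
      ∃ w : Fin 3 → ℝ, w ≠ 0 ∧ ∀ i ∈ X, w ⬝ᵥ p i = 0) ↔
    (∃ p : V → Fin 3 → ℝ, IsSphFw p ∧ MatEquiv σ B p ∧
      SphForcedRigid G (MatEquiv σ B) p ∧
      ∃ w : Fin 3 → ℝ, w ≠ 0 ∧ ∀ i ∈ X, w ⬝ᵥ p i = 0) := by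
  obtain ⟨ε, hε, hεσ⟩ := exists_signs σ hσ2 hfree
  obtain ⟨R, hRt, hRR, hRν⟩ := exists_symm_involution ν u hA.1 hB.1
  have hBR : B * R = -(R * A) := by
    refine ext_of_mulVec_single fun i => ?_
    rw [neg_mulVec, ← mulVec_mulVec, ← mulVec_mulVec, hB.2, hA.2, mulVec_sub, mulVec_smul, hRν,
      ← mulVec_dotProduct_of_symm hRt, ← hRν, mulVec_mulVec, hRR, one_mulVec, neg_sub]
  have hAR := intertwine_symm hRR hBR
  exact ⟨transfer G σ X ε hε hεσ A B R hRt hRR hBR, transfer G σ X ε hε hεσ B A R hRt hRR hAR⟩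

end RigidityPaper
end

section
/- Let G=(V,E) be a graph, let θ:ℤ₂→Aut(G) act freely on V, and let X⊆V with θ(γ)(X)=X. Let S₁,S₂ be linear subspaces of ℝ^{d+1} with 0<dim S₁<d+1, 0<dim S₂<d+1, dim S₁+dim S₂=d+1, and S₁∩S₂={0}. For a linear subspace S of ℝ^{d+1}, let ι_S∈O(d+1) be the orthogonal involution that is the identity on S and −identity on S^⊥, and let C_{ι_S}={I,ι_S}. Then G can be realised as an infinitesimally rigid (respectively, forced ℤ₂-symmetric infinitesimally rigid) ℤ₂-symmetric spherical framework on S^d with respect to θ and a representation τ with τ(ℤ₂)=C_{ι_{S₁}}, with the points assigned to X lying on a great circle, if and only if G can be realised as an infinitesimally rigid (respectively, forced ℤ₂-symmetric infinitesimally rigid) ℤ₂-symmetric spherical framework on S^d with respect to θ and a representation τ' with τ'(ℤ₂)=C_{ι_{S₂}}, with the points assigned to X lying on a great circle. -/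
/-!
Replacing points of a spherical framework by their antipodes changes each edge condition only
by a sign, so it preserves rigidity and, up to the same signs, the space of motions. Since the
involution `σ` acts freely, exactly one point of each vertex orbit can be replaced; this turns a
framework symmetric under `ι_{S₁}` into one symmetric under `-ι_{S₁} = ι_{S₁^⊥}`. As
`dim S₁^⊥ = dim S₂`, an orthogonal map `U` taking `S₁^⊥` onto `S₂` then gives a framework
symmetric under `ι_{S₂}`. Every linear subspace is closed under negation, so a great circle
through the points of `X` is simply carried along by `U`.

The combined operation is `twist`; the signs come from `exists_sign` and `U` from
`exists_orthogonal`. The argument is symmetric in `S₁` and `S₂`, so `realisation_transfer`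
gives both directions.
-/

open Matrix

namespace RigidityPaper

variable {V : Type*}

/-! ### Twisting a framework by signs and an orthogonal map -/

/-- The vectors `ε i • U p i`: each point is moved by `U` and then possibly replaced by its
antipode, according to the sign `ε i`. -/
def twist {n : ℕ} (ε : V → ℝ) (U : Matrix (Fin n) (Fin n) ℝ) (p : V → Fin n → ℝ) :
    V → Fin n → ℝ := fun i => ε i • U *ᵥ p i

section Twist

variable {n : ℕ} {ε : V → ℝ} {U A B : Matrix (Fin n) (Fin n) ℝ}

lemma twist_twist (hε : ∀ i, ε i * ε i = 1) (hU : Uᵀ * U = 1) (p : V → Fin n → ℝ) :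
    twist ε Uᵀ (twist ε U p) = p := by
  funext i
  simp [twist, mulVec_smul, smul_smul, hε, mulVec_mulVec, hU]

lemma mulVec_dotProduct_eq (x y : Fin n → ℝ) : (U *ᵥ x) ⬝ᵥ y = x ⬝ᵥ (Uᵀ *ᵥ y) := by
  rw [dotProduct_comm, dotProduct_mulVec, ← mulVec_transpose, dotProduct_comm]

lemma IsSphFw.twist {p : V → Fin n → ℝ} (hε : ∀ i, ε i * ε i = 1) (hU : Uᵀ * U = 1)
    (hp : IsSphFw p) : IsSphFw (twist ε U p) := by
  have hU' : U * Uᵀ = 1 := mul_eq_one_comm.mp hU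
  refine ⟨fun i => ?_, ?_⟩
  · simp only [RigidityPaper.twist, smul_dotProduct, dotProduct_smul, mulVec_dotProduct_eq,
      mulVec_mulVec, hU, one_mulVec, hp.1 i, smul_eq_mul, mul_one, hε]
  · rw [eq_top_iff]
    -- The span of the new points contains the image under `U` of the span of the old ones.
    have h1 : (Submodule.span ℝ (Set.range p)).map U.mulVecLin ≤
        Submodule.span ℝ (Set.range (RigidityPaper.twist ε U p)) := by
      rw [Submodule.map_span, Submodule.span_le]
      rintro _ ⟨_, ⟨i, rfl⟩, rfl⟩
      have h2 : U.mulVecLin (p i) = ε i • RigidityPaper.twist ε U p i := by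
        simp [RigidityPaper.twist, smul_smul, hε]
      rw [h2]
      exact Submodule.smul_mem _ _ (Submodule.subset_span ⟨i, rfl⟩)
    rw [hp.2] at h1
    intro x _
    refine h1 ⟨Uᵀ *ᵥ x, trivial, ?_⟩
    simp [mulVec_mulVec, hU']

/-- Signs that are opposite on each orbit turn `A`-equivariance into equivariance under
`-U A U⁻¹`. -/
lemma MatEquiv.twist {σ : Equiv.Perm V} {p : V → Fin n → ℝ} (hεσ : ∀ i, ε (σ i) = -ε i)
    (hUA : U * A = -(B * U)) (hp : MatEquiv σ A p) : MatEquiv σ B (twist ε U p) := by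
  intro i
  have hBU : B * U = -(U * A) := by rw [hUA, neg_neg]
  simp only [RigidityPaper.twist, mulVec_smul, mulVec_mulVec, hBU, neg_mulVec, hεσ]
  rw [← mulVec_mulVec, hp i, smul_neg, neg_smul]

/-- Antipodal replacement of points rescales each edge condition by `ε i * ε j`, so motions
of the twisted framework pull back to motions of the original one. -/
lemma SphMotion.untwist {G : SimpleGraph V} {p q : V → Fin n → ℝ} (hε : ∀ i, ε i * ε i = 1)
    (hq : SphMotion G (twist ε U p) q) : SphMotion G p (twist ε Uᵀ q) := by
  refine ⟨fun i j hij => ?_, fun i => ?_⟩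
  · have h := hq.1 i j hij
    simp only [twist, smul_dotProduct, dotProduct_smul, mulVec_dotProduct_eq,
      smul_eq_mul] at h ⊢
    linear_combination (ε i * ε j) * h - ε j * (p i ⬝ᵥ Uᵀ *ᵥ q j) * hε i
      - ε i * (p j ⬝ᵥ Uᵀ *ᵥ q i) * hε j
  · have h := hq.2 i
    simpa only [twist, smul_dotProduct, dotProduct_smul, mulVec_dotProduct_eq] using h

lemma SphTrivial.of_untwist {p q : V → Fin n → ℝ} (hε : ∀ i, ε i * ε i = 1)
    (hU : Uᵀ * U = 1) (h : SphTrivial p (twist ε Uᵀ q)) : SphTrivial (twist ε U p) q := by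
  have hU' : U * Uᵀ = 1 := mul_eq_one_comm.mp hU
  obtain ⟨S, hS, hq⟩ := h
  refine ⟨U * S * Uᵀ, by simp [transpose_mul, hS, Matrix.mul_assoc], fun i => ?_⟩
  have h1 := congrFun (twist_twist (U := Uᵀ) hε (by rwa [transpose_transpose]) q) i
  rw [transpose_transpose] at h1
  rw [← h1]
  simp only [twist] at hq ⊢
  rw [hq i]
  simp only [mulVec_smul, mulVec_mulVec, Matrix.mul_assoc, hU, Matrix.mul_one]

end Twist

/-! ### Existence of the signs and of the orthogonal map -/

/-- A fixed-point-free involution of a finite set admits a sign function that takes opposite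
values on the two elements of each orbit. -/
lemma exists_sign [Finite V] {σ : Equiv.Perm V} (hσ2 : σ * σ = 1) (hfree : ∀ i, σ i ≠ i) :
    ∃ ε : V → ℝ, (∀ i, ε i * ε i = 1) ∧ ∀ i, ε (σ i) = -ε i := by
  classical
  obtain ⟨n, ⟨e⟩⟩ := Finite.exists_equiv_fin V
  refine ⟨fun i => if e i < e (σ i) then 1 else -1, fun i => ?_, fun i => ?_⟩
  · dsimp only
    split_ifs <;> norm_num
  · have h : σ (σ i) = i := by simpa using congrArg (fun τ : Equiv.Perm V => τ i) hσ2
    have hne : e (σ i) ≠ e i := fun h => hfree i (e.injective h)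
    dsimp only
    rw [h]
    rcases lt_or_gt_of_ne hne with h1 | h1
    · rw [if_pos h1, if_neg h1.not_gt, neg_neg]
    · rw [if_neg h1.not_gt, if_pos h1]

/-- If `dim S₁ + dim S₂ = n`, an orthogonal map carrying `S₁` onto the orthogonal complement
of `S₂` conjugates `A₁ = ι_{S₁}` to `-A₂ = -ι_{S₂}`. -/
lemma exists_orthogonal {n : ℕ} (S₁ S₂ : Submodule ℝ (Fin n → ℝ))
    (hsum : Module.finrank ℝ S₁ + Module.finrank ℝ S₂ = n)
    (A₁ A₂ : Matrix (Fin n) (Fin n) ℝ)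
    (hA₁ : (∀ x ∈ S₁, A₁ *ᵥ x = x) ∧
      ∀ x : Fin n → ℝ, (∀ y ∈ S₁, y ⬝ᵥ x = 0) → A₁ *ᵥ x = -x)
    (hA₂ : (∀ x ∈ S₂, A₂ *ᵥ x = x) ∧
      ∀ x : Fin n → ℝ, (∀ y ∈ S₂, y ⬝ᵥ x = 0) → A₂ *ᵥ x = -x) :
    ∃ U : Matrix (Fin n) (Fin n) ℝ, Uᵀ * U = 1 ∧ U * A₁ = -(A₂ * U) := by
  let w : EuclideanSpace ℝ (Fin n) ≃ₗ[ℝ] (Fin n → ℝ) := WithLp.linearEquiv 2 ℝ (Fin n → ℝ)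
  have hw : ∀ x y : EuclideanSpace ℝ (Fin n), inner ℝ x y = w x ⬝ᵥ w y := by
    intro x y
    rw [EuclideanSpace.inner_eq_star_dotProduct, dotProduct_comm]
    rfl
  let T₁ : Submodule ℝ (EuclideanSpace ℝ (Fin n)) := S₁.map w.symm.toLinearMap
  let T₂ : Submodule ℝ (EuclideanSpace ℝ (Fin n)) := S₂.map w.symm.toLinearMap
  have hT₁ : ∀ x ∈ T₁, w x ∈ S₁ := by
    rintro _ ⟨y, hy, rfl⟩
    simpa using hy
  have hT₂ : ∀ x ∈ T₂, w x ∈ S₂ := by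
    rintro _ ⟨y, hy, rfl⟩
    simpa using hy
  have hO₁ : ∀ x ∈ T₁ᗮ, ∀ y ∈ S₁, y ⬝ᵥ w x = 0 := by
    intro x hx y hy
    have h := (Submodule.mem_orthogonal _ _).1 hx (w.symm y) ⟨y, hy, rfl⟩
    rw [hw] at h
    simpa using h
  have hO₂ : ∀ x ∈ T₂ᗮ, ∀ y ∈ S₂, y ⬝ᵥ w x = 0 := by
    intro x hx y hy
    have h := (Submodule.mem_orthogonal _ _).1 hx (w.symm y) ⟨y, hy, rfl⟩
    rw [hw] at h
    simpa using h
  have hd₁ : Module.finrank ℝ T₁ = Module.finrank ℝ S₁ := LinearEquiv.finrank_map_eq w.symm S₁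
  have hd₂ : Module.finrank ℝ T₂ = Module.finrank ℝ S₂ := LinearEquiv.finrank_map_eq w.symm S₂
  have hd : Module.finrank ℝ T₁ = Module.finrank ℝ T₂ᗮ := by
    have := T₂.finrank_add_finrank_orthogonal
    rw [finrank_euclideanSpace_fin] at this
    omega
  let f : T₁ ≃ₗᵢ[ℝ] T₂ᗮ :=
    (stdOrthonormalBasis ℝ T₁).repr.trans
      ((stdOrthonormalBasis ℝ T₂ᗮ).reindex (finCongr hd.symm)).repr.symm
  let L : T₁ →ₗᵢ[ℝ] EuclideanSpace ℝ (Fin n) := T₂ᗮ.subtypeₗᵢ.comp f.toLinearIsometry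
  let M := L.extend
  have hM₁ : ∀ x ∈ T₁, M x ∈ T₂ᗮ := by
    intro x hx
    have h : M x = L ⟨x, hx⟩ := LinearIsometry.extend_apply L ⟨x, hx⟩
    rw [h]
    exact (f ⟨x, hx⟩).2
  have hM₂ : ∀ x ∈ T₁ᗮ, M x ∈ T₂ := by
    intro x hx
    rw [← T₂.orthogonal_orthogonal, Submodule.mem_orthogonal]
    intro u hu
    -- `u` is the image under `M` of a vector of `T₁`, because `f` is onto.
    have h : M (f.symm ⟨u, hu⟩ : T₁) = u := by
      rw [LinearIsometry.extend_apply L (f.symm ⟨u, hu⟩)]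
      simp [L]
    rw [← h, M.inner_map_map]
    exact (Submodule.mem_orthogonal _ _).1 hx _ (f.symm ⟨u, hu⟩).2
  let U : Matrix (Fin n) (Fin n) ℝ :=
    LinearMap.toMatrix' (w.toLinearMap ∘ₗ M.toLinearMap ∘ₗ w.symm.toLinearMap)
  have hUw : ∀ x, U *ᵥ w x = w (M x) := by
    intro x
    simp [U, LinearMap.toMatrix'_mulVec]
  refine ⟨U, ?_, ?_⟩
  · refine ext_of_mulVec_single fun j => dotProduct_eq _ _ fun v => ?_
    obtain ⟨x, hx⟩ := w.surjective (Pi.single j 1)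
    obtain ⟨y, rfl⟩ := w.surjective v
    rw [← hx, one_mulVec, ← mulVec_mulVec, mulVec_dotProduct_eq, transpose_transpose, hUw, hUw,
      ← hw, ← hw, M.inner_map_map]
  · refine ext_of_mulVec_single fun j => ?_
    obtain ⟨x, hx⟩ := w.surjective (Pi.single j 1)
    rw [← hx, neg_mulVec, ← mulVec_mulVec, ← mulVec_mulVec]
    obtain ⟨a, ha, b, hb, rfl⟩ := T₁.exists_add_mem_mem_orthogonal x
    rw [map_add, mulVec_add, hA₁.1 _ (hT₁ a ha), hA₁.2 _ (hO₁ b hb), mulVec_add, mulVec_add,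
      mulVec_neg, hUw, hUw, mulVec_add, hA₂.1 _ (hT₂ _ (hM₂ b hb)), hA₂.2 _ (hO₂ _ (hM₁ a ha))]
    abel

/-! ### Transfer of realisations -/

/-- Twisting preserves all the required properties of a realisation, apart from rigidity. -/
lemma twist_realisation {n : ℕ} {ε : V → ℝ} {U A B : Matrix (Fin n) (Fin n) ℝ}
    {σ : Equiv.Perm V} {X : Set V}
    (hε : ∀ i, ε i * ε i = 1) (hεσ : ∀ i, ε (σ i) = -ε i)
    (hU : Uᵀ * U = 1) (hUA : U * A = -(B * U)) {p : V → Fin n → ℝ}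
    (hp : IsSphFw p) (hpA : MatEquiv σ A p)
    (hW : ∃ W : Submodule ℝ (Fin n → ℝ), Module.finrank ℝ W = 2 ∧ ∀ i ∈ X, p i ∈ W) :
    IsSphFw (twist ε U p) ∧ MatEquiv σ B (twist ε U p) ∧
      ∃ W : Submodule ℝ (Fin n → ℝ), Module.finrank ℝ W = 2 ∧
        ∀ i ∈ X, twist ε U p i ∈ W := by
  refine ⟨hp.twist hε hU, hpA.twist hεσ hUA, ?_⟩
  obtain ⟨W, hW2, hWX⟩ := hW
  have hinj : Function.Injective U.mulVecLin := by
    intro x y hxy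
    have h := congrArg (fun z => Uᵀ *ᵥ z) hxy
    simpa [mulVec_mulVec, hU] using h
  refine ⟨W.map U.mulVecLin, ?_, fun i hi => ?_⟩
  · rw [← hW2]
    exact (Submodule.equivMapOfInjective _ hinj W).finrank_eq.symm
  · exact Submodule.smul_mem _ _ ⟨p i, hWX i hi, rfl⟩

/-- The implication from `S₁` to `S₂`, for rigidity and for forced symmetric rigidity. -/
lemma realisation_transfer {n : ℕ} [Finite V] (G : SimpleGraph V) (σ : Equiv.Perm V)
    (hσ2 : σ * σ = 1) (hfree : ∀ i : V, σ i ≠ i) (X : Set V)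
    (S₁ S₂ : Submodule ℝ (Fin n → ℝ))
    (hsum : Module.finrank ℝ S₁ + Module.finrank ℝ S₂ = n)
    (A₁ A₂ : Matrix (Fin n) (Fin n) ℝ)
    (hA₁ : (∀ x ∈ S₁, A₁ *ᵥ x = x) ∧
      ∀ x : Fin n → ℝ, (∀ y ∈ S₁, y ⬝ᵥ x = 0) → A₁ *ᵥ x = -x)
    (hA₂ : (∀ x ∈ S₂, A₂ *ᵥ x = x) ∧
      ∀ x : Fin n → ℝ, (∀ y ∈ S₂, y ⬝ᵥ x = 0) → A₂ *ᵥ x = -x) :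
    ((∃ p : V → Fin n → ℝ, IsSphFw p ∧ MatEquiv σ A₁ p ∧ SphRigid G p ∧
        ∃ W : Submodule ℝ (Fin n → ℝ), Module.finrank ℝ W = 2 ∧ ∀ i ∈ X, p i ∈ W) →
      (∃ p : V → Fin n → ℝ, IsSphFw p ∧ MatEquiv σ A₂ p ∧ SphRigid G p ∧
        ∃ W : Submodule ℝ (Fin n → ℝ), Module.finrank ℝ W = 2 ∧ ∀ i ∈ X, p i ∈ W)) ∧
    ((∃ p : V → Fin n → ℝ, IsSphFw p ∧ MatEquiv σ A₁ p ∧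
        SphForcedRigid G (MatEquiv σ A₁) p ∧
        ∃ W : Submodule ℝ (Fin n → ℝ), Module.finrank ℝ W = 2 ∧ ∀ i ∈ X, p i ∈ W) →
      (∃ p : V → Fin n → ℝ, IsSphFw p ∧ MatEquiv σ A₂ p ∧
        SphForcedRigid G (MatEquiv σ A₂) p ∧
        ∃ W : Submodule ℝ (Fin n → ℝ), Module.finrank ℝ W = 2 ∧ ∀ i ∈ X, p i ∈ W)) := by
  obtain ⟨ε, hε, hεσ⟩ := exists_sign hσ2 hfree
  obtain ⟨U, hU, hUA⟩ := exists_orthogonal S₁ S₂ hsum A₁ A₂ hA₁ hA₂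
  constructor
  · rintro ⟨p, hp, hpA, hr, hW⟩
    obtain ⟨h1, h2, h3⟩ := twist_realisation hε hεσ hU hUA hp hpA hW
    exact ⟨twist ε U p, h1, h2,
      fun q hq => (hr _ (hq.untwist hε)).of_untwist hε hU, h3⟩
  · rintro ⟨p, hp, hpA, hr, hW⟩
    obtain ⟨h1, h2, h3⟩ := twist_realisation hε hεσ hU hUA hp hpA hW
    -- The intertwining relation for the inverse `Uᵀ`, used to pull back symmetric motions.
    have hUA' : Uᵀ * A₂ = -(A₁ * Uᵀ) := by
      have hU' : U * Uᵀ = 1 := mul_eq_one_comm.mp hU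
      calc Uᵀ * A₂ = Uᵀ * (A₂ * U) * Uᵀ := by
            rw [Matrix.mul_assoc, Matrix.mul_assoc, hU', Matrix.mul_one]
        _ = -(Uᵀ * (U * A₁) * Uᵀ) := by rw [hUA]; simp
        _ = -(A₁ * Uᵀ) := by rw [← Matrix.mul_assoc, hU, Matrix.one_mul]
    exact ⟨twist ε U p, h1, h2,
      fun q hq hs => (hr _ (hq.untwist hε) (hs.twist hεσ hUA')).of_untwist hε hU, h3⟩

/-- pairing of the order-two groups generated by the involutions
`ι_{S₁}` and `ι_{S₂}` of `ℝ^{d+1}`, for complementary subspaces `S₁, S₂`: realisability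
of `G` as an infinitesimally rigid (resp. forced `ℤ₂`-symmetric infinitesimally rigid)
symmetric spherical framework on `S^d` with the points of `X` on a great circle is
equivalent for the two groups. -/
theorem statement_16 {V : Type*} [Fintype V] (G : SimpleGraph V) {d : ℕ}
    (σ : Equiv.Perm V) (hσ2 : σ * σ = 1) (hσaut : IsGraphAut G σ)
    (hfree : ∀ i : V, σ i ≠ i)
    (X : Set V) (hX : ∀ i ∈ X, σ i ∈ X)
    (S₁ S₂ : Submodule ℝ (Fin (d + 1) → ℝ))
    (h₁pos : 0 < Module.finrank ℝ S₁) (h₁lt : Module.finrank ℝ S₁ < d + 1)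
    (h₂pos : 0 < Module.finrank ℝ S₂) (h₂lt : Module.finrank ℝ S₂ < d + 1)
    (hsum : Module.finrank ℝ S₁ + Module.finrank ℝ S₂ = d + 1)
    (hint : S₁ ⊓ S₂ = ⊥)
    (A₁ A₂ : Matrix (Fin (d + 1)) (Fin (d + 1)) ℝ)
    (hA₁ : (∀ x ∈ S₁, A₁ *ᵥ x = x) ∧
      ∀ x : Fin (d + 1) → ℝ, (∀ y ∈ S₁, y ⬝ᵥ x = 0) → A₁ *ᵥ x = -x)
    (hA₂ : (∀ x ∈ S₂, A₂ *ᵥ x = x) ∧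
      ∀ x : Fin (d + 1) → ℝ, (∀ y ∈ S₂, y ⬝ᵥ x = 0) → A₂ *ᵥ x = -x) :
    ((∃ p : V → Fin (d + 1) → ℝ, IsSphFw p ∧ MatEquiv σ A₁ p ∧ SphRigid G p ∧
        ∃ W : Submodule ℝ (Fin (d + 1) → ℝ), Module.finrank ℝ W = 2 ∧
          ∀ i ∈ X, p i ∈ W) ↔
      (∃ p : V → Fin (d + 1) → ℝ, IsSphFw p ∧ MatEquiv σ A₂ p ∧ SphRigid G p ∧
        ∃ W : Submodule ℝ (Fin (d + 1) → ℝ), Module.finrank ℝ W = 2 ∧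
          ∀ i ∈ X, p i ∈ W)) ∧
    ((∃ p : V → Fin (d + 1) → ℝ, IsSphFw p ∧ MatEquiv σ A₁ p ∧
        SphForcedRigid G (MatEquiv σ A₁) p ∧
        ∃ W : Submodule ℝ (Fin (d + 1) → ℝ), Module.finrank ℝ W = 2 ∧
          ∀ i ∈ X, p i ∈ W) ↔
      (∃ p : V → Fin (d + 1) → ℝ, IsSphFw p ∧ MatEquiv σ A₂ p ∧
        SphForcedRigid G (MatEquiv σ A₂) p ∧
        ∃ W : Submodule ℝ (Fin (d + 1) → ℝ), Module.finrank ℝ W = 2 ∧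
          ∀ i ∈ X, p i ∈ W)) := by
  have h12 := realisation_transfer G σ hσ2 hfree X S₁ S₂ hsum A₁ A₂ hA₁ hA₂
  have h21 := realisation_transfer G σ hσ2 hfree X S₂ S₁ (by omega) A₂ A₁ hA₂ hA₁
  exact ⟨⟨h12.1, h21.1⟩, ⟨h12.2, h21.2⟩⟩

end RigidityPaper
end
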